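/- Fix natural numbers N, t, s with t + s ≤ N. Then (α, β) satisfies the (t, s) full-insdel orthogonality conditions (C5) if and only if (α, β) satisfies the (t, s) semi-insdel orthogonality conditions (C3). (Hence for permutation-invariant codes, the orthogonality conditions for t insertions followed by s deletions coincide with those for s deletions followed by t insertions.) -/

import Mathlib

open Finset

theorem pascal_sum_aux (N n : ℕ) (h : n < N) (d e : ℕ → ℂ) :
    ∑ k ∈ Finset.range (N + 1), ((n + 1).choose k : ℂ) / d k * e k =
    ∑ k ∈ Finset.range (N + 1), (n.choose k : ℂ) / d k * e k +
    ∑ k ∈ Finset.range (N + 1), (n.choose k : ℂ) / d (k + 1) * e (k + 1) := by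
  rw [Finset.sum_range_succ' _ N, Finset.sum_range_succ' (fun k => (n.choose k : ℂ) / d k * e k) N,
    Finset.sum_range_succ (fun k => (n.choose k : ℂ) / d (k + 1) * e (k + 1)) N,
    Nat.choose_eq_zero_of_lt h]
  simp only [Nat.choose_succ_succ, Nat.choose_zero_right, Nat.cast_add, add_div, add_mul,
    Finset.sum_add_distrib]
  simp
  ring

theorem fullInsdel_iff_semiInsdel_orthogonality
    (N t s : ℕ) (hts : t + s ≤ N)
    (α β : ℕ → ℂ) (hα : ∀ k : ℕ, N < k → α k = 0) (hβ : ∀ k : ℕ, N < k → β k = 0) :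
    (∀ ℓ j a' b' : ℕ, ℓ ≤ min s t → j ≤ t - ℓ → a' ≤ t + s - 2 * ℓ - j → b' ≤ t + s - 2 * ℓ - j →
      ∑ k ∈ Finset.range (N + 1), ((N - t - s + 2 * ℓ + j).choose k : ℂ) / ((Real.sqrt ((N.choose (k + a') * N.choose (k + b') : ℕ)) : ℝ) : ℂ) * ((starRingEnd ℂ) (α (k + a')) * β (k + b')) = 0) ↔
    (∀ j a' b' : ℕ, j ≤ t → a' ≤ t + s - j → b' ≤ t + s - j →
      ∑ k ∈ Finset.range (N + 1), ((N - t - s + j).choose k : ℂ) / ((Real.sqrt ((N.choose (k + a') * N.choose (k + b') : ℕ)) : ℝ) : ℂ) * ((starRingEnd ℂ) (α (k + a')) * β (k + b')) = 0) := by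
  constructor
  · intro h j a b hj ha hb
    have := h 0 j a b (Nat.zero_le _) (by omega) (by omega) (by omega)
    simpa only [Nat.mul_zero, Nat.add_zero] using this
  · intro h
    have key : ∀ m : ℕ, m ≤ t + s → ∀ a b : ℕ, a ≤ t + s - m → b ≤ t + s - m →
        ∑ k ∈ Finset.range (N + 1), ((N - t - s + m).choose k : ℂ) / ((Real.sqrt ((N.choose (k + a) * N.choose (k + b) : ℕ)) : ℝ) : ℂ) * ((starRingEnd ℂ) (α (k + a)) * β (k + b)) = 0 := by
      intro m
      induction m with
      | zero => intro _ a b ha hb; exact h 0 a b (Nat.zero_le _) ha hb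
      | succ m ih =>
        intro hm a b ha hb
        have e := pascal_sum_aux N (N - t - s + m) (by omega)
          (fun k => ((Real.sqrt ((N.choose (k + a) * N.choose (k + b) : ℕ)) : ℝ) : ℂ))
          (fun k => (starRingEnd ℂ) (α (k + a)) * β (k + b))
        have h1 := ih (by omega) a b (by omega) (by omega)
        have h2 := ih (by omega) (a + 1) (b + 1) (by omega) (by omega)
        simp only [Nat.add_right_comm _ 1 a, Nat.add_right_comm _ 1 b] at e
        simp only [← Nat.add_assoc] at h2 ⊢
        rw [h1, h2, add_zero] at e
        exact e
    intro l j a b hl hj ha hb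
    have hl' : l ≤ s ∧ l ≤ t := le_min_iff.mp hl
    have := key (2 * l + j) (by omega) a b (by omega) (by omega)
    rwa [← Nat.add_assoc] at this
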